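/- Let S₁, S₂ be finite sets of d-dimensional Boolean vectors (d ≥ 1) such that S₁ is nonempty, every vector in S₁ has at least one coordinate equal to 1, and the all-ones vector belongs to S₂. Let Γ be the game graph with vertices {s} ∪ S₁ ∪ S₂ ∪ {c₁,…,c_d}, where s belongs to player 2 and all other vertices to player 1, and with edges: s → x for every x ∈ S₁; x → c_i iff x_i = 1 (for x ∈ S₁); c_i → y iff y_i = 1 (for y ∈ S₂); and y → s for every y ∈ S₂. Consider the generalized Büchi objective ⋀_{y∈S₂} Büchi({y}) for player 1. Then the following are equivalent: (1) there exist x ∈ S₁ and y ∈ S₂ that are orthogonal, i.e., there is no coordinate i with x_i = y_i = 1; (2) s is not in the winning set of player 1; (3) the winning set of player 1 is empty. -/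

import Mathlib

open Classical

universe u

/-- A game graph: a directed graph `E` on vertex set `V` together with the set
`P1` of player-1 vertices; player-2 vertices are the complement of `P1`. -/
structure GameGraph (V : Type u) where
  E : V → V → Prop
  P1 : Set V

/-- The two players. -/
inductive Player : Type where
  | one : Player
  | two : Player

/-- The opponent of a player. -/
def Player.opp : Player → Player
  | .one => .two
  | .two => .one

/-- Select the first argument for player 1 and the second for player 2. -/
def Player.sel {α : Sort*} : Player → α → α → α
  | .one, a, _ => a
  | .two, _, b => b

variable {V : Type u}

/-- The vertices belonging to a player. -/
def GameGraph.verts (Γ : GameGraph V) : Player → Set V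
  | .one => Γ.P1
  | .two => Γ.P1ᶜ

/-- Every vertex has at least one outgoing edge. -/
def GameGraph.NoDead (Γ : GameGraph V) : Prop := ∀ v, ∃ w, Γ.E v w

/-- A (general, history-dependent) strategy: given the history of the play so far
(the vertices visited strictly before the current one) and the current vertex,
choose a next vertex. -/
abbrev Strat (V : Type u) : Type u := List V → V → V

/-- A strategy is memoryless if it depends only on the current vertex. -/
def Memoryless (σ : Strat V) : Prop := ∀ h h' v, σ h v = σ h' v

/-- A strategy is valid for player `p` if at every vertex of player `p` it
chooses a successor of that vertex. -/
def GameGraph.ValidFor (Γ : GameGraph V) (p : Player) (σ : Strat V) : Prop :=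
  ∀ hist v, v ∈ Γ.verts p → Γ.E v (σ hist v)

/-- One step of the play: the player-1 strategy moves at `P1`-vertices, the
player-2 strategy elsewhere. -/
noncomputable def GameGraph.step (Γ : GameGraph V) (σ π : Strat V)
    (hist : List V) (v : V) : V :=
  if v ∈ Γ.P1 then σ hist v else π hist v

/-- The play determined by a start vertex `v`, a player-1 strategy `σ` and a
player-2 strategy `π`, together with its history. -/
noncomputable def GameGraph.playAux (Γ : GameGraph V) (σ π : Strat V) (v : V) :
    ℕ → List V × V
  | 0 => ([], v)
  | n + 1 =>
      let q := Γ.playAux σ π v n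
      (q.1 ++ [q.2], Γ.step σ π q.1 q.2)

/-- The play determined by a start vertex `v`, a player-1 strategy `σ` and a
player-2 strategy `π`. -/
noncomputable def GameGraph.play (Γ : GameGraph V) (σ π : Strat V) (v : V)
    (n : ℕ) : V :=
  (Γ.playAux σ π v n).2

/-- The play from `v` where player `p` uses strategy `σ` and the opponent uses
strategy `τ`. -/
noncomputable def GameGraph.winPlay (Γ : GameGraph V) (p : Player)
    (σ τ : Strat V) (v : V) : ℕ → V :=
  Γ.play (p.sel σ τ) (p.sel τ σ) v

/-- Player `p` wins from `v` for objective `Ω`: player 1 wants the resulting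
play to lie in `Ω`, player 2 wants it to lie outside `Ω`. -/
def GameGraph.Wins (Γ : GameGraph V) (p : Player) (Ω : Set (ℕ → V)) (v : V) :
    Prop :=
  ∃ σ, Γ.ValidFor p σ ∧ ∀ τ, Γ.ValidFor p.opp τ →
    p.sel (Γ.winPlay p σ τ v ∈ Ω) (Γ.winPlay p σ τ v ∉ Ω)

/-- A player-`p` dominion for objective `Ω`: a nonempty set from each of whose
vertices player `p` has a winning strategy that moreover keeps the play inside
the set. -/
def GameGraph.Dominion (Γ : GameGraph V) (p : Player) (Ω : Set (ℕ → V))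
    (D : Set V) : Prop :=
  D.Nonempty ∧ ∀ v ∈ D, ∃ σ, Γ.ValidFor p σ ∧ ∀ τ, Γ.ValidFor p.opp τ →
    (p.sel (Γ.winPlay p σ τ v ∈ Ω) (Γ.winPlay p σ τ v ∉ Ω)) ∧
    ∀ n, Γ.winPlay p σ τ v n ∈ D

/-- The player-`p` attractor of `U`: the least set containing `U`, every
player-`p` vertex with some successor in it, and every opponent vertex all of
whose successors are in it. -/
inductive GameGraph.Attr (Γ : GameGraph V) (p : Player) (U : Set V) : V → Prop
  | base {v} : v ∈ U → GameGraph.Attr Γ p U v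
  | own {v w} : v ∈ Γ.verts p → Γ.E v w → GameGraph.Attr Γ p U w →
      GameGraph.Attr Γ p U v
  | opp {v} : v ∈ Γ.verts p.opp → (∀ w, Γ.E v w → GameGraph.Attr Γ p U w) →
      GameGraph.Attr Γ p U v

/-- The player-`p` attractor, as a set. -/
def GameGraph.attr (Γ : GameGraph V) (p : Player) (U : Set V) : Set V :=
  {v | Γ.Attr p U v}

/-- The iterative construction `R_j` of the player-`p` attractor. -/
def GameGraph.attrIter (Γ : GameGraph V) (p : Player) (U : Set V) : ℕ → Set V
  | 0 => U
  | n + 1 =>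
      Γ.attrIter p U n
        ∪ {v | v ∈ Γ.verts p ∧ ∃ w, Γ.E v w ∧ w ∈ Γ.attrIter p U n}
        ∪ {v | v ∈ Γ.verts p.opp ∧ ∀ w, Γ.E v w → w ∈ Γ.attrIter p U n}

/-- The `p`-rank of `v` with respect to `U`: the least `j` with `v ∈ R_j`, and
`∞` if there is no such `j`. -/
noncomputable def GameGraph.rank (Γ : GameGraph V) (p : Player) (U : Set V)
    (v : V) : ℕ∞ :=
  ⨅ n ∈ {n : ℕ | v ∈ Γ.attrIter p U n}, (n : ℕ∞)

/-- A set `U` is `p`-closed: every player-`p` vertex of `U` has all its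
successors in `U`, and every opponent vertex of `U` has some successor in `U`. -/
def GameGraph.PClosed (Γ : GameGraph V) (p : Player) (U : Set V) : Prop :=
  ∀ v ∈ U, (v ∈ Γ.verts p → ∀ w, Γ.E v w → w ∈ U) ∧
    (v ∈ Γ.verts p.opp → ∃ w, Γ.E v w ∧ w ∈ U)

/-- The induced game graph on a subset `U` of the vertices. -/
def GameGraph.sub (Γ : GameGraph V) (U : Set V) : GameGraph U where
  E a b := Γ.E (a : V) (b : V)
  P1 := {a : U | (a : V) ∈ Γ.P1}

/-- The game graph with the roles of the two players exchanged. -/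
def GameGraph.swap (Γ : GameGraph V) : GameGraph V where
  E := Γ.E
  P1 := Γ.P1ᶜ

/-- The set of vertices occurring infinitely often in a play. -/
def InfOcc (ω : ℕ → V) : Set V := {v | ∀ n, ∃ m, n ≤ m ∧ ω m = v}

/-- An objective is prefix-independent if membership of a play depends only on
the set of vertices visited infinitely often. -/
def PrefixIndep (Ω : Set (ℕ → V)) : Prop :=
  ∀ ω ω', InfOcc ω = InfOcc ω' → (ω ∈ Ω ↔ ω' ∈ Ω)

/-- The Büchi objective with target set `T`. -/
def BuchiObj (T : Set V) : Set (ℕ → V) := {ω | (InfOcc ω ∩ T).Nonempty}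

/-- The generalized Büchi objective with target sets `T i`. -/
def GenBuchiObj {ι : Sort*} (T : ι → Set V) : Set (ℕ → V) :=
  {ω | ∀ i, (InfOcc ω ∩ T i).Nonempty}

/-- The disjunctive co-Büchi objective with target sets `T i`. -/
def DisjCoBuchiObj {ι : Sort*} (T : ι → Set V) : Set (ℕ → V) :=
  {ω | ∃ i, InfOcc ω ∩ T i = ∅}

/-- The GR(1) objective with assumption sets `L t` and guarantee sets `U ℓ`. -/
def GR1Obj {ι₁ ι₂ : Sort*} (L : ι₁ → Set V) (U : ι₂ → Set V) : Set (ℕ → V) :=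
  {ω | (∀ t, (InfOcc ω ∩ L t).Nonempty) → ∀ ℓ, (InfOcc ω ∩ U ℓ).Nonempty}

/-- An objective on the full vertex set, restricted to plays of the induced
game graph on `U`. -/
def subObj (U : Set V) (Ω : Set (ℕ → V)) : Set (ℕ → ↥U) :=
  {ω | (fun n => (ω n : V)) ∈ Ω}

/-- The out-degree of a vertex. -/
noncomputable def GameGraph.outDeg (Γ : GameGraph V) (v : V) : ℕ :=
  {w | Γ.E v w}.ncard

/-- A hierarchical graph decomposition of a game graph `Γ`: for every vertex
`v`, `idx v` enumerates the incoming edges of `v` (i.e., their sources) by the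
positions `0, …, indeg(v) − 1`, listing edges from player-2 vertices first. -/
structure HierDecomp (Γ : GameGraph V) where
  idx : V → V → ℕ
  idx_inj : ∀ v u u', Γ.E u v → Γ.E u' v → idx v u = idx v u' → u = u'
  idx_lt : ∀ v u, Γ.E u v → idx v u < {u' | Γ.E u' v}.ncard
  p2_first : ∀ v u u', Γ.E u v → Γ.E u' v → u ∉ Γ.P1 → u' ∈ Γ.P1 →
      idx v u < idx v u'

/-- The `i`-th level `Γ_i = (G_i, (V₁,V₂))` of the hierarchical graph
decomposition: `G_i` keeps all outgoing edges of vertices of out-degree at most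
`2^i`, and the first `2^i` incoming edges of every vertex. -/
def HierDecomp.graph {Γ : GameGraph V} (H : HierDecomp Γ) (i : ℕ) :
    GameGraph V where
  E u v := Γ.E u v ∧ (Γ.outDeg u ≤ 2 ^ i ∨ H.idx v u < 2 ^ i)
  P1 := Γ.P1

/-- The exception set `Z_i`: player-2 vertices with no outgoing edge in `G_i`
together with player-1 vertices with more than `2^i` outgoing edges in `G`. -/
def HierDecomp.Z {Γ : GameGraph V} (H : HierDecomp Γ) (i : ℕ) : Set V :=
  {v | v ∉ Γ.P1 ∧ ¬ ∃ w, (H.graph i).E v w} ∪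
    {v | v ∈ Γ.P1 ∧ 2 ^ i < Γ.outDeg v}

/-- Cyclic successor `ℓ ⊕ 1` on `Fin k`. -/
def finSucc {k : ℕ} (ℓ : Fin k) : Fin k :=
  ⟨(ℓ.val + 1) % k, Nat.mod_lt _ (Nat.lt_of_le_of_lt (Nat.zero_le _) ℓ.isLt)⟩

/-- The bound `n̄ = min (h − 1) |V ∖ T|` of the progress measure. -/
noncomputable def nbar (h : ℕ) (T : Set V) : ℕ := min (h - 1) Tᶜ.ncard

/-- The value of the best successor of `v` for the player owning `v`. -/
noncomputable def GameGraph.best (Γ : GameGraph V) {k : ℕ} (T : Fin k → Set V)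
    (ρ : Fin k → V → ℕ∞) (ℓ : Fin k) (v : V) : ℕ∞ :=
  let ℓ' := if v ∈ T ℓ then finSucc ℓ else ℓ
  if v ∈ Γ.P1 then ⨅ w ∈ {w | Γ.E v w}, ρ ℓ' w
  else ⨆ w ∈ {w | Γ.E v w}, ρ ℓ' w

/-- The increment operation `incr` of the progress measure (for the pair
`(v, ℓ)`). -/
noncomputable def pmIncr (h : ℕ) {k : ℕ} (T : Fin k → Set V) (ℓ : Fin k)
    (v : V) (x : ℕ∞) : ℕ∞ :=
  if v ∈ T ℓ ∧ x ≠ ⊤ then 0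
  else if x < (nbar h (T ℓ) : ℕ∞) then x + 1 else ⊤

/-- The update operator of the progress measure: update `ρ ℓ v` to
`max (ρ ℓ v) (incr (best v))`. -/
noncomputable def GameGraph.pmStep (Γ : GameGraph V) (h : ℕ) {k : ℕ}
    (T : Fin k → Set V) (ρ : Fin k → V → ℕ∞) : Fin k → V → ℕ∞ :=
  fun ℓ v => max (ρ ℓ v) (pmIncr h T ℓ v (Γ.best T ρ ℓ v))

/-- `ρ` is the progress measure associated with `Γ`, `T` and `h`: the least
fixed point (starting from the all-zero functions, i.e., the least one) of the
update operator. -/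
def GameGraph.IsProgressMeasure (Γ : GameGraph V) (h : ℕ) {k : ℕ}
    (T : Fin k → Set V) (ρ : Fin k → V → ℕ∞) : Prop :=
  Γ.pmStep h T ρ = ρ ∧ ∀ ρ', Γ.pmStep h T ρ' = ρ' → ∀ ℓ v, ρ ℓ v ≤ ρ' ℓ v

/-- Player `p` can force, from `v`, that the play stays in `D` forever and
visits every target set `T i` infinitely often. -/
def GameGraph.ForcesStayBuchi (Γ : GameGraph V) (p : Player) (D : Set V)
    {ι : Sort*} (T : ι → Set V) (v : V) : Prop :=
  ∃ σ, Γ.ValidFor p σ ∧ ∀ τ, Γ.ValidFor p.opp τ →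
    (∀ n, Γ.winPlay p σ τ v n ∈ D) ∧
    ∀ i n, ∃ m, n ≤ m ∧ Γ.winPlay p σ τ v m ∈ T i

/-- The vertex set of the orthogonal-vectors reduction: a start vertex `s`,
a copy of `S₁`, the coordinate vertices `c_1, …, c_d`, and a copy of `S₂`. -/
abbrev OVVert (d : ℕ) (S₁ S₂ : Set (Fin d → Bool)) : Type :=
  Unit ⊕ (↥S₁ ⊕ (Fin d ⊕ ↥S₂))

/-- The edge relation of the orthogonal-vectors reduction. -/
def ovE {d : ℕ} (S₁ S₂ : Set (Fin d → Bool)) :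
    OVVert d S₁ S₂ → OVVert d S₁ S₂ → Prop
  | Sum.inl _, Sum.inr (Sum.inl _) => True
  | Sum.inr (Sum.inl x), Sum.inr (Sum.inr (Sum.inl i)) =>
      (x : Fin d → Bool) i = true
  | Sum.inr (Sum.inr (Sum.inl i)), Sum.inr (Sum.inr (Sum.inr y)) =>
      (y : Fin d → Bool) i = true
  | Sum.inr (Sum.inr (Sum.inr _)), Sum.inl _ => True
  | _, _ => False

/-- The game graph of the orthogonal-vectors reduction: the start vertex `s`
belongs to player 2 and all other vertices to player 1. -/
def ovGame {d : ℕ} (S₁ S₂ : Set (Fin d → Bool)) :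
    GameGraph (OVVert d S₁ S₂) where
  E := ovE S₁ S₂
  P1 := {w | w ≠ Sum.inl ()}

/-! Player 1 wins a generalized Büchi game from everywhere as soon as every vertex lies in her
attractor of every target: she chases the targets one after the other in an order in which each
recurs infinitely often, and the attractor rank decreases until the current target is hit.

If no `x ∈ S₁` is orthogonal to `y ∈ S₂`, then all vertices of the reduction are in player 1's
attractor of `y`, because after player 2 has moved to `x` a common coordinate leads on to `y`.
If `x` and `y` are orthogonal, player 2 always moves to `x`; a visit to `y` after the first three
steps would have to come from `s` via `x` and a coordinate vertex common to `x` and `y`. -/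

open Filter

section InfinitelyOften

theorem mem_infOcc {ω : ℕ → V} {v : V} : v ∈ InfOcc ω ↔ ∃ᶠ n in atTop, ω n = v :=
  frequently_atTop.symm

theorem infOcc_inter_nonempty_iff {ω : ℕ → V} {T : Set V} (hT : T.Finite) :
    (InfOcc ω ∩ T).Nonempty ↔ ∃ᶠ n in atTop, ω n ∈ T := by
  calc (InfOcc ω ∩ T).Nonempty
    _ ↔ ∃ v ∈ T, ∃ᶠ n in atTop, ω n = v := by
      simp only [Set.Nonempty, Set.mem_inter_iff, mem_infOcc, and_comm]
    _ ↔ ∃ᶠ n in atTop, ∃ v ∈ T, ω n = v := (frequently_exists_finite hT).symm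
    _ ↔ ∃ᶠ n in atTop, ω n ∈ T := by simp only [exists_eq_right']

theorem exists_seq_frequently_eq (α : Type*) [Countable α] [Nonempty α] :
    ∃ f : ℕ → α, ∀ a, ∃ᶠ k in atTop, f k = a := by
  obtain ⟨g, hg⟩ := exists_surjective_nat α
  refine ⟨fun k => g k.unpair.1, fun a => frequently_atTop.2 fun n => ?_⟩
  obtain ⟨j, rfl⟩ := hg a
  exact ⟨Nat.pair j n, Nat.right_le_pair j n, by simp only [Nat.unpair_pair]⟩

end InfinitelyOften

namespace GameGraph

variable {Γ : GameGraph V} {p : Player}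

section Plays

variable {σ τ : Strat V} {v : V} {n : ℕ}

theorem mem_verts_or_mem_verts_opp (Γ : GameGraph V) (p : Player) (v : V) :
    v ∈ Γ.verts p ∨ v ∈ Γ.verts p.opp := by
  cases p
  · exact Classical.em (v ∈ Γ.P1)
  · exact (Classical.em (v ∈ Γ.P1)).symm

/-- The vertices visited strictly before time `n` in `winPlay`. -/
noncomputable def winHistory (Γ : GameGraph V) (p : Player) (σ τ : Strat V) (v : V) (n : ℕ) :
    List V :=
  (Γ.playAux (p.sel σ τ) (p.sel τ σ) v n).1

theorem winHistory_succ :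
    Γ.winHistory p σ τ v (n + 1) = Γ.winHistory p σ τ v n ++ [Γ.winPlay p σ τ v n] :=
  rfl

theorem winPlay_succ_of_mem_verts (h : Γ.winPlay p σ τ v n ∈ Γ.verts p) :
    Γ.winPlay p σ τ v (n + 1) = σ (Γ.winHistory p σ τ v n) (Γ.winPlay p σ τ v n) := by
  cases p
  · exact if_pos h
  · exact if_neg h

theorem winPlay_succ_of_mem_verts_opp (h : Γ.winPlay p σ τ v n ∈ Γ.verts p.opp) :
    Γ.winPlay p σ τ v (n + 1) = τ (Γ.winHistory p σ τ v n) (Γ.winPlay p σ τ v n) := by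
  cases p
  · exact if_neg h
  · exact if_pos h

theorem edge_winPlay (hσ : Γ.ValidFor p σ) (hτ : Γ.ValidFor p.opp τ) (n : ℕ) :
    Γ.E (Γ.winPlay p σ τ v n) (Γ.winPlay p σ τ v (n + 1)) := by
  rcases Γ.mem_verts_or_mem_verts_opp p (Γ.winPlay p σ τ v n) with h | h
  · exact winPlay_succ_of_mem_verts h ▸ hσ _ _ h
  · exact winPlay_succ_of_mem_verts_opp h ▸ hτ _ _ h

end Plays

section Attractor

variable {U : Set V} {v w : V} {n : ℕ}

theorem mem_attrIter_succ_of_edge (hv : v ∈ Γ.verts p) (hvw : Γ.E v w)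
    (hw : w ∈ Γ.attrIter p U n) : v ∈ Γ.attrIter p U (n + 1) :=
  .inl (.inr ⟨hv, w, hvw, hw⟩)

theorem mem_attrIter_succ_of_forall_edge (hv : v ∈ Γ.verts p.opp)
    (h : ∀ w, Γ.E v w → w ∈ Γ.attrIter p U n) : v ∈ Γ.attrIter p U (n + 1) :=
  .inr ⟨hv, h⟩

theorem exists_ranking (hΓ : Γ.NoDead) (hU : ∀ v, ∃ n, v ∈ Γ.attrIter p U n) :
    ∃ (rank : V → ℕ) (move : V → V), (∀ v, Γ.E v (move v)) ∧
      ∀ v ∉ U, ∀ w, Γ.E v w → (v ∈ Γ.verts p → w = move v) → rank w < rank v := by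
  let rank (v : V) : ℕ := Nat.find (hU v)
  have rank_le {w : V} {k : ℕ} (hw : w ∈ Γ.attrIter p U k) : rank w ≤ k := Nat.find_min' (hU w) hw
  suffices h : ∀ v, ∃ w, Γ.E v w ∧ (v ∉ U → ∀ w', Γ.E v w' → (v ∈ Γ.verts p → w' = w) →
      rank w' < rank v) by
    choose move hE hlt using h
    exact ⟨rank, move, hE, hlt⟩
  intro v
  obtain ⟨u, hvu⟩ := hΓ v
  have hmem : v ∈ Γ.attrIter p U (rank v) := Nat.find_spec (hU v)
  cases hk : rank v with rw [hk] at hmem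
  | zero => exact ⟨u, hvu, fun hv => absurd hmem hv⟩
  | succ k =>
    rcases hmem with (hmem | ⟨hv, w, hvw, hw⟩) | ⟨-, hall⟩
    · exact absurd (rank_le hmem) (by lia)
    · exact ⟨w, hvw, fun _ w' _ hw' => Nat.lt_succ_of_le (rank_le (hw' hv ▸ hw))⟩
    · exact ⟨u, hvu, fun _ w' hw' _ => Nat.lt_succ_of_le (rank_le (hall w' hw'))⟩

end Attractor

section Chase

/-- The memory of a strategy that chases the targets `T 0, T 1, …` in this order: how many of them
have been reached along the history `h`. -/
noncomputable def chaseIndex (T : ℕ → Set V) (h : List V) : ℕ :=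
  h.foldl (fun k v => if v ∈ T k then k + 1 else k) 0

theorem chaseIndex_append_singleton (T : ℕ → Set V) (h : List V) (v : V) :
    chaseIndex T (h ++ [v]) =
      if v ∈ T (chaseIndex T h) then chaseIndex T h + 1 else chaseIndex T h :=
  List.foldl_append

theorem exists_le_mem_target {ω : ℕ → V} {T : ℕ → Set V} {index : ℕ → ℕ} {rank : ℕ → V → ℕ}
    (index_zero : index 0 = 0)
    (index_succ : ∀ n, index (n + 1) = if ω n ∈ T (index n) then index n + 1 else index n)
    (rank_lt : ∀ n, ω n ∉ T (index n) → rank (index n) (ω (n + 1)) < rank (index n) (ω n))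
    (k : ℕ) : ∃ n, k ≤ n ∧ ω n ∈ T k := by
  have index_le (n : ℕ) : index n ≤ n := by
    induction n with
    | zero => exact index_zero.le
    | succ n ih => rw [index_succ]; split_ifs <;> lia
  have hit (n : ℕ) : ∃ m, index m = index n ∧ ω m ∈ T (index n) := by
    induction hr : rank (index n) (ω n) using Nat.strong_induction_on generalizing n with
    | _ r ih =>
      by_cases hn : ω n ∈ T (index n)
      · exact ⟨n, rfl, hn⟩
      · have hsucc : index (n + 1) = index n := by rw [index_succ, if_neg hn]
        rw [← hsucc]
        exact ih _ (by rw [hsucc, ← hr]; exact rank_lt n hn) (n + 1) rfl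
  have attained (k : ℕ) : ∃ n, index n = k := by
    induction k with
    | zero => exact ⟨0, index_zero⟩
    | succ k ih =>
      obtain ⟨n, rfl⟩ := ih
      obtain ⟨m, hm, hmT⟩ := hit n
      exact ⟨m + 1, by rw [index_succ, hm, if_pos hmT]⟩
  obtain ⟨n, rfl⟩ := attained k
  obtain ⟨m, hm, hmT⟩ := hit n
  exact ⟨m, hm ▸ index_le m, hmT⟩

theorem exists_validFor_forall_exists_le_mem (hΓ : Γ.NoDead) {T : ℕ → Set V}
    (hT : ∀ k v, ∃ n, v ∈ Γ.attrIter p (T k) n) :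
    ∃ σ, Γ.ValidFor p σ ∧ ∀ τ, Γ.ValidFor p.opp τ →
      ∀ v k, ∃ n, k ≤ n ∧ Γ.winPlay p σ τ v n ∈ T k := by
  choose rank move hmove hrank using fun k => exists_ranking hΓ (hT k)
  let σ : Strat V := fun h v => move (chaseIndex T h) v
  have hσ : Γ.ValidFor p σ := fun h v _ => hmove (chaseIndex T h) v
  refine ⟨σ, hσ, fun τ hτ v => exists_le_mem_target (rank := rank)
    (index := fun n => chaseIndex T (Γ.winHistory p σ τ v n)) rfl (fun n => ?_) fun n hn => ?_⟩
  · rw [winHistory_succ, chaseIndex_append_singleton]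
  · exact hrank _ _ hn _ (edge_winPlay hσ hτ n) winPlay_succ_of_mem_verts

theorem wins_genBuchiObj_of_attrIter {ι : Type*} [Countable ι] (hΓ : Γ.NoDead) {T : ι → Set V}
    (hfin : ∀ i, (T i).Finite) (hT : ∀ i v, ∃ n, v ∈ Γ.attrIter .one (T i) n) (v : V) :
    Γ.Wins .one (GenBuchiObj T) v := by
  rcases isEmpty_or_nonempty ι with _ | _
  · choose next hnext using hΓ
    exact ⟨fun _ => next, fun _ v _ => hnext v, fun _ _ => isEmptyElim⟩
  obtain ⟨f, hf⟩ := exists_seq_frequently_eq ι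
  obtain ⟨σ, hσ, hvisit⟩ := exists_validFor_forall_exists_le_mem hΓ fun k => hT (f k)
  refine ⟨σ, hσ, fun τ hτ i => (infOcc_inter_nonempty_iff (hfin i)).2 <|
    frequently_atTop.2 fun N => ?_⟩
  obtain ⟨k, hNk, rfl⟩ := frequently_atTop.1 (hf i) N
  obtain ⟨n, hkn, hn⟩ := hvisit τ hτ v k
  exact ⟨n, hNk.trans hkn, hn⟩

end Chase

end GameGraph

namespace OVVert

variable {d : ℕ} {S₁ S₂ : Set (Fin d → Bool)} {v w : OVVert d S₁ S₂}

/-- The vertex `s`. -/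
abbrev start : OVVert d S₁ S₂ := .inl ()

/-- The vertex of `x ∈ S₁`. -/
abbrev left (x : S₁) : OVVert d S₁ S₂ := .inr (.inl x)

/-- The vertex `c_i` of the coordinate `i`. -/
abbrev coord (i : Fin d) : OVVert d S₁ S₂ := .inr (.inr (.inl i))

/-- The vertex of `y ∈ S₂`. -/
abbrev right (y : S₂) : OVVert d S₁ S₂ := .inr (.inr (.inr y))

theorem ovE_start_iff : ovE S₁ S₂ start w ↔ ∃ x, w = left x := by
  rcases w with _ | _ | _ | _ <;> simp [ovE]

theorem ovE_coord_iff {i : Fin d} :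
    ovE S₁ S₂ (coord i) w ↔ ∃ y : S₂, w = right y ∧ y.1 i = true := by
  rcases w with _ | _ | _ | _ <;> simp [ovE]

theorem ovE_iff_left {x : S₁} : ovE S₁ S₂ v (left x) ↔ v = start := by
  rcases v with _ | _ | _ | _ <;> simp [ovE]

theorem ovE_iff_coord {i : Fin d} :
    ovE S₁ S₂ v (coord i) ↔ ∃ x : S₁, v = left x ∧ x.1 i = true := by
  rcases v with _ | _ | _ | _ <;> simp [ovE]

theorem ovE_iff_right {y : S₂} :
    ovE S₁ S₂ v (right y) ↔ ∃ i, v = coord i ∧ y.1 i = true := by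
  rcases v with _ | _ | _ | _ <;> simp [ovE]

end OVVert

section Reduction

open GameGraph OVVert

variable {d : ℕ} {S₁ S₂ : Set (Fin d → Bool)}

/-- Player 1's objective in the orthogonal-vectors reduction: visit every `y ∈ S₂` infinitely
often. -/
def ovObj (S₁ S₂ : Set (Fin d → Bool)) : Set (ℕ → OVVert d S₁ S₂) :=
  GenBuchiObj fun y : S₂ => {right y}

theorem ovGame_noDead (h1 : S₁.Nonempty) (hnz : ∀ x ∈ S₁, ∃ i, x i = true)
    (hones : (fun _ => true) ∈ S₂) : (ovGame S₁ S₂).NoDead := by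
  rintro (_ | x | i | y)
  · exact ⟨left ⟨_, h1.some_mem⟩, trivial⟩
  · exact (hnz x x.2).imp' coord fun _ hi => hi
  · exact ⟨right ⟨_, hones⟩, rfl⟩
  · exact ⟨start, trivial⟩

theorem exists_mem_attrIter_right (hΓ : (ovGame S₁ S₂).NoDead) {y : S₂}
    (hy : ∀ x ∈ S₁, ∃ i, x i = true ∧ y.1 i = true) (v : OVVert d S₁ S₂) :
    ∃ n, v ∈ (ovGame S₁ S₂).attrIter .one {right y} n := by
  have target : right y ∈ (ovGame S₁ S₂).attrIter .one {right y} 0 := rfl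
  have mem_left (x : S₁) : left x ∈ (ovGame S₁ S₂).attrIter .one {right y} 2 := by
    obtain ⟨i, hxi, hyi⟩ := hy x x.2
    have mem_coord : coord i ∈ (ovGame S₁ S₂).attrIter .one {right y} 1 :=
      mem_attrIter_succ_of_edge Sum.inr_ne_inl (ovE_iff_right.2 ⟨i, rfl, hyi⟩) target
    exact mem_attrIter_succ_of_edge Sum.inr_ne_inl (ovE_iff_coord.2 ⟨x, rfl, hxi⟩) mem_coord
  have mem_start : start ∈ (ovGame S₁ S₂).attrIter .one {right y} 3 := by
    refine mem_attrIter_succ_of_forall_edge (not_not_intro rfl) fun w hw => ?_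
    obtain ⟨x, rfl⟩ := ovE_start_iff.1 hw
    exact mem_left x
  have mem_right (y' : S₂) : right y' ∈ (ovGame S₁ S₂).attrIter .one {right y} 4 :=
    mem_attrIter_succ_of_edge (w := start) Sum.inr_ne_inl trivial mem_start
  rcases v with _ | x | i | y'
  · exact ⟨3, mem_start⟩
  · exact ⟨2, mem_left x⟩
  · obtain ⟨w, hw⟩ := hΓ (coord i)
    obtain ⟨y', rfl, -⟩ := ovE_coord_iff.1 hw
    exact ⟨5, mem_attrIter_succ_of_edge Sum.inr_ne_inl hw (mem_right y')⟩
  · exact ⟨4, mem_right y'⟩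

theorem wins_of_forall_exists_common_coord (hΓ : (ovGame S₁ S₂).NoDead)
    (h : ∀ x ∈ S₁, ∀ y ∈ S₂, ∃ i, x i = true ∧ y i = true) (v : OVVert d S₁ S₂) :
    (ovGame S₁ S₂).Wins .one (ovObj S₁ S₂) v :=
  wins_genBuchiObj_of_attrIter hΓ (T := fun y : S₂ => {right y})
    (fun _ => Set.finite_singleton _)
    (fun y => exists_mem_attrIter_right hΓ fun x hx => h x hx y y.2) v

theorem exists_left_of_walk_to_right {ω : ℕ → OVVert d S₁ S₂}
    (hω : ∀ n, ovE S₁ S₂ (ω n) (ω (n + 1))) {n : ℕ} {y : S₂} (hy : ω (n + 3) = right y) :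
    ω n = start ∧ ∃ x : S₁, ω (n + 1) = left x ∧ ∃ i, x.1 i = true ∧ y.1 i = true := by
  obtain ⟨i, hcoord, hyi⟩ := ovE_iff_right.1 (hy ▸ hω (n + 2))
  obtain ⟨x, hleft, hxi⟩ := ovE_iff_coord.1 (hcoord ▸ hω (n + 1))
  exact ⟨ovE_iff_left.1 (hleft ▸ hω n), x, hleft, i, hxi, hyi⟩

theorem not_wins_of_orthogonal {x : S₁} {y : S₂} (hxy : ∀ i, ¬ (x.1 i = true ∧ y.1 i = true))
    (v : OVVert d S₁ S₂) : ¬ (ovGame S₁ S₂).Wins .one (ovObj S₁ S₂) v := by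
  rintro ⟨σ, hσ, hwin⟩
  let π : Strat (OVVert d S₁ S₂) := fun _ _ => left x
  have hπ : (ovGame S₁ S₂).ValidFor .two π := fun _ _ hv => ovE_iff_left.2 (not_not.1 hv)
  have visits : ∃ᶠ n in atTop, (ovGame S₁ S₂).winPlay .one σ π v n = right y :=
    (infOcc_inter_nonempty_iff (Set.finite_singleton _)).1 (hwin π hπ y)
  obtain ⟨m, hm, hmy⟩ := frequently_atTop.1 visits 3
  obtain ⟨n, rfl⟩ := Nat.exists_eq_add_of_le' hm
  obtain ⟨hstart, x', hx', i, hx'i, hyi⟩ :=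
    exists_left_of_walk_to_right (edge_winPlay hσ hπ) hmy
  have hx : (ovGame S₁ S₂).winPlay .one σ π v (n + 1) = left x :=
    winPlay_succ_of_mem_verts_opp (not_not_intro hstart)
  obtain rfl : x' = x := by simpa using hx'.symm.trans hx
  exact hxy i ⟨hx'i, hyi⟩

theorem ov_reduction_general (hΓ : (ovGame S₁ S₂).NoDead) :
    [∃ x ∈ S₁, ∃ y ∈ S₂, ∀ i, ¬ (x i = true ∧ y i = true),
      ¬ (ovGame S₁ S₂).Wins .one (ovObj S₁ S₂) start,
      ∀ w, ¬ (ovGame S₁ S₂).Wins .one (ovObj S₁ S₂) w].TFAE := by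
  tfae_have 1 → 3 := fun ⟨x, hx, y, hy, hxy⟩ =>
    not_wins_of_orthogonal (x := ⟨x, hx⟩) (y := ⟨y, hy⟩) hxy
  tfae_have 3 → 2 := fun h => h start
  tfae_have 2 → 1 := by
    contrapose!
    exact fun h => wins_of_forall_exists_common_coord hΓ h start
  tfae_finish

end Reduction

/-- in the orthogonal-vectors reduction (with `S₁` nonempty,
every vector of `S₁` having some coordinate `1`, and the all-ones vector in
`S₂`), the following are equivalent for the generalized Büchi objective
`⋀_{y ∈ S₂} Büchi({y})`: (1) some `x ∈ S₁` and `y ∈ S₂` are orthogonal;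
(2) `s` is not in the winning set of player 1; (3) the winning set of player 1
is empty. -/
theorem ov_reduction {d : ℕ} (hd : 1 ≤ d) (S₁ S₂ : Set (Fin d → Bool))
    (h1 : S₁.Nonempty) (hnz : ∀ x ∈ S₁, ∃ i, x i = true)
    (hones : (fun _ => true) ∈ S₂) :
    ((∃ x ∈ S₁, ∃ y ∈ S₂, ∀ i, ¬ (x i = true ∧ y i = true)) ↔
      ¬ (ovGame S₁ S₂).Wins Player.one
          (GenBuchiObj fun y : ↥S₂ =>
            ({Sum.inr (Sum.inr (Sum.inr y))} : Set (OVVert d S₁ S₂)))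
          (Sum.inl ())) ∧
    (¬ (ovGame S₁ S₂).Wins Player.one
          (GenBuchiObj fun y : ↥S₂ =>
            ({Sum.inr (Sum.inr (Sum.inr y))} : Set (OVVert d S₁ S₂)))
          (Sum.inl ()) ↔
      ∀ w, ¬ (ovGame S₁ S₂).Wins Player.one
          (GenBuchiObj fun y : ↥S₂ =>
            ({Sum.inr (Sum.inr (Sum.inr y))} : Set (OVVert d S₁ S₂))) w) := by
  have equiv := ov_reduction_general (ovGame_noDead h1 hnz hones)
  exact ⟨equiv.out 0 1, equiv.out 1 2⟩
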